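/- Let b > 0, Δ ≥ 0, and m, m' ∈ ℝ with |m − m'| ≤ Δ. Then Lap(m, b) is absolutely continuous with respect to Lap(m', b) and for every real α > 1 the α-Rényi divergence satisfies D_α(Lap(m, b) ‖ Lap(m', b)) ≤ (Δ²/(2b²)) · α. (This is the paper's zCDP bound for the Laplace validation mechanism: with sensitivity Δ = 1 and scale λ_val, the per-round Rényi divergence is at most α/(2λ_val²).) -/

import Mathlib

open MeasureTheory

/-- The `α`-Rényi divergence `D_α(μ‖ν) = (1/(α−1)) · log ∫ (dμ/dν)^α dν`. -/
noncomputable def renyiDiv {X : Type*} [MeasurableSpace X]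
    (μ ν : Measure X) (α : ℝ) : ℝ :=
  (α - 1)⁻¹ * Real.log (∫ x, (μ.rnDeriv ν x).toReal ^ α ∂ν)

/-- The Laplace measure on `ℝ` with location `m` and scale `b`, with density
`x ↦ (1/(2b))·exp(−|x−m|/b)` with respect to Lebesgue measure. -/
noncomputable def laplaceMeasure (m b : ℝ) : Measure ℝ :=
  volume.withDensity (fun x => ENNReal.ofReal (1 / (2 * b) * Real.exp (-|x - m| / b)))

open ProbabilityTheory

lemma cgf_bound {Ω : Type*} [MeasurableSpace Ω] (ν : Measure Ω) [IsProbabilityMeasure ν]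
    (L : Ω → ℝ) (hL : Measurable L) (e : ℝ) (he : ∀ x, |L x| ≤ e) (h1 : cgf L ν 1 = 0)
    (α : ℝ) (hα : 1 < α) : cgf L ν α ≤ e ^ 2 / 2 * (α * (α - 1)) := by
  have hb : ∀ᵐ x ∂ν, L x ∈ Set.Icc (-e) e := ae_of_all _ fun x => abs_le.mp (he x)
  have hi (u : ℝ) : Integrable (fun x => Real.exp (u * L x)) ν :=
    integrable_exp_mul_of_mem_Icc hL.aemeasurable hb
  have hs : integrableExpSet L ν = Set.univ := Set.eq_univ_of_forall hi
  have hmem (u : ℝ) : u ∈ interior (integrableExpSet L ν) := by simp [hs]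
  have han (u : ℝ) : AnalyticAt ℝ (cgf L ν) u := analyticAt_cgf (hmem u)
  have hd1 (u : ℝ) : HasDerivAt (cgf L ν) (deriv (cgf L ν) u) u :=
    (han u).differentiableAt.hasDerivAt
  have hd2 (u : ℝ) : HasDerivAt (deriv (cgf L ν)) (iteratedDeriv 2 (cgf L ν) u) u := by
    have := (han u).deriv.differentiableAt.hasDerivAt
    rwa [iteratedDeriv_succ, iteratedDeriv_one]
  have hv (u : ℝ) : iteratedDeriv 2 (cgf L ν) u ≤ e ^ 2 := by
    rw [← variance_tilted_mul (hmem u)]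
    have := isProbabilityMeasure_tilted (hi u)
    have h := variance_le_sq_of_bounded (μ := ν.tilted (u * L ·))
      ((tilted_absolutelyContinuous ν (u * L ·)) hb) hL.aemeasurable
    refine h.trans (le_of_eq ?_)
    ring
  have hconc : ConcaveOn ℝ Set.univ (fun u => cgf L ν u - e ^ 2 / 2 * (u * (u - 1))) := by
    refine concaveOn_of_hasDerivWithinAt2_nonpos convex_univ
      (f' := fun u => deriv (cgf L ν) u - e ^ 2 / 2 * (2 * u - 1))
      (f'' := fun u => iteratedDeriv 2 (cgf L ν) u - e ^ 2) ?_ ?_ ?_ ?_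
    · intro u _
      have := (han u).continuousAt
      exact (this.sub (by fun_prop)).continuousWithinAt
    · intro u _
      refine HasDerivAt.hasDerivWithinAt ?_
      refine (hd1 u).sub ?_
      have := ((hasDerivAt_id u).mul ((hasDerivAt_id u).sub_const 1)).const_mul (e ^ 2 / 2)
      convert! this using 1
      simp only [id]; ring
    · intro u _
      refine HasDerivAt.hasDerivWithinAt ?_
      refine (hd2 u).sub ?_
      have := (((hasDerivAt_id u).const_mul 2).sub_const 1).const_mul (e ^ 2 / 2)
      convert! this using 1
      ring
    · intro u _
      have := hv u
      linarith
  have h0 : cgf L ν 0 = 0 := cgf_zero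
  have hα0 : 0 < α := by linarith
  have := @hconc.2 0 (Set.mem_univ 0) α (Set.mem_univ α) (1 - α⁻¹) α⁻¹
    (by have := inv_le_one_of_one_le₀ hα.le; linarith) (by positivity) (by ring)
  simp only [smul_eq_mul, mul_zero, zero_add, inv_mul_cancel₀ hα0.ne', h0, h1] at this
  have h3 : α⁻¹ * (cgf L ν α - e ^ 2 / 2 * (α * (α - 1))) ≤ 0 := by linarith
  have h4 : 0 < α⁻¹ := by positivity
  nlinarith

lemma measurable_lapDens (m b : ℝ) :
    Measurable (fun x : ℝ => ENNReal.ofReal (1 / (2 * b) * Real.exp (-|x - m| / b))) := by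
  fun_prop

lemma isProb_laplace (m b : ℝ) (hb : 0 < b) : IsProbabilityMeasure (laplaceMeasure m b) := by
  constructor
  have hI : ∫ x : ℝ, Real.exp (-|x| / b) = 2 * b := by
    rw [integral_comp_abs (f := fun x => Real.exp (-x / b))]
    have := integral_exp_mul_Ioi (a := -b⁻¹) (by simpa using hb) 0
    simp only [mul_zero, Real.exp_zero] at this
    rw [show (fun x => Real.exp (-x / b)) = fun x => Real.exp (-b⁻¹ * x) by
      ext x; congr 1; ring, this]
    field_simp
  have hint : Integrable (fun x : ℝ => Real.exp (-|x| / b)) := by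
    by_contra h
    rw [integral_undef h] at hI
    linarith
  rw [laplaceMeasure, withDensity_apply _ MeasurableSet.univ, Measure.restrict_univ,
    ← ofReal_integral_eq_lintegral_ofReal]
  · rw [integral_const_mul, integral_sub_right_eq_self (fun x => Real.exp (-|x| / b)) m, hI]
    rw [one_div_mul_cancel (by positivity)]; simp
  · exact (hint.comp_sub_right m).const_mul _
  · exact ae_of_all _ fun x => by positivity

lemma laplace_eq (m m' b : ℝ) (hb : 0 < b) : laplaceMeasure m b =
    (laplaceMeasure m' b).withDensity
      (fun x => ENNReal.ofReal (Real.exp ((|x - m'| - |x - m|) / b))) := by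
  rw [laplaceMeasure, laplaceMeasure, ← withDensity_mul _ (by fun_prop) (by fun_prop)]
  congr 1
  ext x
  rw [Pi.mul_apply, ← ENNReal.ofReal_mul (by positivity), mul_assoc, ← Real.exp_add]
  congr 3
  ring

/-- The Laplace mechanism with sensitivity `Δ` and scale `b` satisfies
`(Δ²/(2b²))`-zCDP: `D_α(Lap(m,b)‖Lap(m',b)) ≤ (Δ²/(2b²))·α` for all `α > 1`. -/
theorem laplace_zcdp (b Δ m m' : ℝ) (hb : 0 < b) (hΔ : 0 ≤ Δ) (hmm : |m - m'| ≤ Δ) :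
    laplaceMeasure m b ≪ laplaceMeasure m' b ∧
      ∀ α : ℝ, 1 < α →
        renyiDiv (laplaceMeasure m b) (laplaceMeasure m' b) α ≤ Δ ^ 2 / (2 * b ^ 2) * α := by
  have heq := laplace_eq m m' b hb
  have hp := isProb_laplace m b hb
  have hp' := isProb_laplace m' b hb
  refine ⟨heq ▸ withDensity_absolutelyContinuous _ _, fun α hα => ?_⟩
  set ν := laplaceMeasure m' b with hν
  set L : ℝ → ℝ := fun x => (|x - m'| - |x - m|) / b with hLdef
  have hL : Measurable L := by fun_prop
  have he : ∀ x, |L x| ≤ Δ / b := fun x => by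
    rw [hLdef]
    simp only
    rw [abs_div, abs_of_pos hb]
    gcongr
    refine (abs_abs_sub_abs_le _ _).trans ?_
    rwa [show x - m' - (x - m) = m - m' by ring]
  have hrn : (laplaceMeasure m b).rnDeriv ν =ᵐ[ν] fun x => ENNReal.ofReal (Real.exp (L x)) := by
    rw [heq]
    exact Measure.rnDeriv_withDensity ν (by fun_prop)
  have h1 : cgf L ν 1 = 0 := by
    have h : ∫⁻ x, ENNReal.ofReal (Real.exp (L x)) ∂ν = 1 := by
      have := hp.measure_univ
      rwa [heq, withDensity_apply _ MeasurableSet.univ, Measure.restrict_univ] at this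
    rw [cgf, mgf, integral_eq_lintegral_of_nonneg_ae (ae_of_all _ fun x => by positivity)
      (by fun_prop)]
    simp [h]
  have hint : ∫ x, ((laplaceMeasure m b).rnDeriv ν x).toReal ^ α ∂ν = mgf L ν α := by
    refine integral_congr_ae ?_
    filter_upwards [hrn] with x hx
    rw [hx, ENNReal.toReal_ofReal (by positivity), ← Real.exp_mul, mul_comm]
  have hc := cgf_bound ν L hL (Δ / b) he h1 α hα
  rw [renyiDiv, hint]
  change (α - 1)⁻¹ * cgf L ν α ≤ _
  rw [inv_mul_le_iff₀ (by linarith)]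
  refine hc.trans (le_of_eq ?_)
  field_simp
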